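/- (Corollary 1, n → ∞ part) Let θ₀, θ₁ ∈ (0,1) with θ₀ < θ₁ and let P_F ∈ (0,1). For each n ≥ 1, let γₙ be the least natural number such that ℙ(Bin(n,θ₀) ≤ γₙ) ≥ 1 − P_F, and let ζₙ = (P_F − ℙ(Bin(n,θ₀) > γₙ)) / ℙ(Bin(n,θ₀) = γₙ). Then the detection probability P_D(n) = ℙ(Bin(n,θ₁) > γₙ) + ζₙ·ℙ(Bin(n,θ₁) = γₙ) converges to 1 as n → ∞. -/

import Mathlib

/-- Binomial probability mass: `ℙ(Bin(n,θ) = l) = C(n,l) θ^l (1-θ)^(n-l)`. -/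
noncomputable def binomPMF (n : ℕ) (θ : ℝ) (l : ℕ) : ℝ :=
  (n.choose l : ℝ) * θ ^ l * (1 - θ) ^ (n - l)

/-- Binomial CDF: `ℙ(Bin(n,θ) ≤ γ)`. -/
noncomputable def binomCDF (n : ℕ) (θ : ℝ) (γ : ℕ) : ℝ :=
  ∑ l ∈ Finset.range (γ + 1), binomPMF n θ l

/-- Binomial tail: `ℙ(Bin(n,θ) > γ)`. -/
noncomputable def binomTail (n : ℕ) (θ : ℝ) (γ : ℕ) : ℝ :=
  ∑ l ∈ Finset.Icc (γ + 1) n, binomPMF n θ l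

/-!
Let `Δ = θ₁ - θ₀ > 0`. Since the variance of `Bin(n,θ)` is at most `n / 4`, Chebyshev's inequality
bounds by `1 / (n Δ²)` each probability that `Bin(n,θ₀)` or `Bin(n,θ₁)` falls on the wrong side of
the midpoint `n (θ₀ + θ₁) / 2`. Once this is at most `P_F`, the threshold `γₙ`, being a quantile
under `θ₀`, lies below the midpoint, so `ℙ(Bin(n,θ₁) > γₙ) ≥ 1 - 1 / (n Δ²)`. The randomization
`ζₙ` lies in `[0, 1]`, so `P_D(n)` is squeezed between this tail and `1`.
-/

open Filter Finset Topology

section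

variable {n k : ℕ} {θ θ₀ θ₁ δ q P_F : ℝ}

lemma binomPMF_eq_eval_bernsteinPolynomial (n : ℕ) (θ : ℝ) (l : ℕ) :
    binomPMF n θ l = (bernsteinPolynomial ℝ n l).eval θ := by
  simp [binomPMF, bernsteinPolynomial]

lemma binomPMF_nonneg (hθ : θ ∈ Set.Icc (0 : ℝ) 1) (l : ℕ) : 0 ≤ binomPMF n θ l :=
  mul_nonneg (mul_nonneg (Nat.cast_nonneg _) (pow_nonneg hθ.1 _))
    (pow_nonneg (sub_nonneg.2 hθ.2) _)

lemma sum_binomPMF (n : ℕ) (θ : ℝ) : ∑ l ∈ range (n + 1), binomPMF n θ l = 1 := by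
  simp only [binomPMF_eq_eval_bernsteinPolynomial, ← Polynomial.eval_finsetSum,
    bernsteinPolynomial.sum, Polynomial.eval_one]

lemma sum_sq_sub_mul_binomPMF (n : ℕ) (θ : ℝ) :
    ∑ l ∈ range (n + 1), (n * θ - l) ^ 2 * binomPMF n θ l = n * θ * (1 - θ) := by
  simpa [Polynomial.eval_finsetSum, binomPMF_eq_eval_bernsteinPolynomial] using
    congrArg (Polynomial.eval θ) (bernsteinPolynomial.variance ℝ n)

lemma binomCDF_add_binomTail (θ : ℝ) (hk : k ≤ n) : binomCDF n θ k + binomTail n θ k = 1 := by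
  rw [binomCDF, binomTail, ← Ico_add_one_right_eq_Icc,
    sum_range_add_sum_Ico _ (by omega), sum_binomPMF]

lemma binomPMF_le_binomCDF (hθ : θ ∈ Set.Icc (0 : ℝ) 1) (k : ℕ) :
    binomPMF n θ k ≤ binomCDF n θ k :=
  single_le_sum (fun l _ => binomPMF_nonneg hθ l) (self_mem_range_succ k)

lemma sum_binomPMF_le_of_le_abs_sub (hθ : θ ∈ Set.Icc (0 : ℝ) 1) (hn : 0 < n) (hδ : 0 < δ)
    {s : Finset ℕ} (hs : s ⊆ range (n + 1)) (hdev : ∀ l ∈ s, n * δ ≤ |n * θ - l|) :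
    ∑ l ∈ s, binomPMF n θ l ≤ (4 * n * δ ^ 2)⁻¹ := by
  have hsq : ∀ l ∈ s, (n * δ) ^ 2 ≤ (n * θ - l) ^ 2 := fun l hl => by
    simpa only [sq_abs] using pow_le_pow_left₀ (by positivity) (hdev l hl) 2
  have hvar : (n * δ) ^ 2 * ∑ l ∈ s, binomPMF n θ l ≤ n / 4 := calc
    _ ≤ ∑ l ∈ s, (n * θ - l) ^ 2 * binomPMF n θ l := by
      rw [mul_sum]
      exact sum_le_sum fun l hl => mul_le_mul_of_nonneg_right (hsq l hl) (binomPMF_nonneg hθ l)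
    _ ≤ ∑ l ∈ range (n + 1), (n * θ - l) ^ 2 * binomPMF n θ l :=
      sum_le_sum_of_subset_of_nonneg hs fun l _ _ =>
        mul_nonneg (sq_nonneg _) (binomPMF_nonneg hθ l)
    _ = n * (θ * (1 - θ)) := by rw [sum_sq_sub_mul_binomPMF, mul_assoc]
    _ ≤ n * (1 / 4) := by
      gcongr
      nlinarith [sq_nonneg (θ - 1 / 2)]
    _ = n / 4 := by ring
  calc
    _ ≤ n / 4 / (n * δ) ^ 2 := (le_div_iff₀' (by positivity)).2 hvar
    _ = (4 * n * δ ^ 2)⁻¹ := by field_simp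

lemma binomTail_le_inv (hθ : θ ∈ Set.Icc (0 : ℝ) 1) (hn : 0 < n) (hδ : 0 < δ)
    (hk : n * (θ + δ) ≤ k + 1) : binomTail n θ k ≤ (4 * n * δ ^ 2)⁻¹ := by
  refine sum_binomPMF_le_of_le_abs_sub hθ hn hδ (fun l => by simp) fun l hl => ?_
  have hkl : (k : ℝ) + 1 ≤ l := mod_cast (mem_Icc.1 hl).1
  rw [le_abs]
  right
  linarith

lemma binomCDF_le_inv (hθ : θ ∈ Set.Icc (0 : ℝ) 1) (hn : 0 < n) (hδ : 0 < δ) (hkn : k ≤ n)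
    (hk : k ≤ n * (θ - δ)) : binomCDF n θ k ≤ (4 * n * δ ^ 2)⁻¹ := by
  refine sum_binomPMF_le_of_le_abs_sub hθ hn hδ (range_mono (Nat.succ_le_succ hkn)) fun l hl => ?_
  have hlk : (l : ℝ) ≤ k := mod_cast Nat.lt_succ_iff.1 (mem_range.1 hl)
  rw [le_abs]
  left
  linarith

/-- `k` is the `q`-quantile of `Bin(n,θ)`, i.e. the least `k` with `ℙ(Bin(n,θ) ≤ k) ≥ q`. The
detection threshold `γₙ` is the quantile at level `1 - P_F` under `θ₀`. -/
def IsBinomQuantile (n : ℕ) (θ q : ℝ) (k : ℕ) : Prop :=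
  q ≤ binomCDF n θ k ∧ ∀ j < k, binomCDF n θ j < q

namespace IsBinomQuantile

lemma le (hk : IsBinomQuantile n θ q k) (hq : q ≤ 1) : k ≤ n := by
  by_contra! hnk
  have hlt : binomCDF n θ n < q := hk.2 n hnk
  rw [binomCDF, sum_binomPMF] at hlt
  exact hlt.not_ge hq

lemma binomCDF_le_add_binomPMF (hk : IsBinomQuantile n θ q k) (hq : 0 ≤ q) :
    binomCDF n θ k ≤ q + binomPMF n θ k := by
  obtain _ | j := k
  · simpa [binomCDF] using hq
  · rw [binomCDF, sum_range_succ]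
    exact add_le_add_left (hk.2 j j.lt_succ_self).le _

lemma cast_le (hk : IsBinomQuantile n θ q k) (hθ : θ ∈ Set.Icc (0 : ℝ) 1) (hn : 0 < n)
    (hδ : 0 < δ) (hq : (4 * n * δ ^ 2)⁻¹ ≤ 1 - q) : k ≤ n * (θ + δ) := by
  have hkn : k ≤ n := hk.le (sub_nonneg.1 (le_trans (by positivity) hq))
  by_contra! hlt
  obtain _ | j := k
  · have : 0 ≤ n * (θ + δ) := mul_nonneg n.cast_nonneg (add_nonneg hθ.1 hδ.le)
    exact absurd hlt (by simpa using this)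
  · have hcdf : binomCDF n θ j < q := hk.2 j j.lt_succ_self
    have htail : binomTail n θ j ≤ (4 * n * δ ^ 2)⁻¹ :=
      binomTail_le_inv hθ hn hδ (by exact_mod_cast hlt.le)
    linarith [binomCDF_add_binomTail θ (Nat.le_of_succ_le hkn)]

end IsBinomQuantile

/-- The randomization parameter `ζₙ` of the bit-density test with threshold `k`, which makes its
false-alarm probability equal to `P_F`. -/
noncomputable def randomization (n : ℕ) (θ₀ P_F : ℝ) (k : ℕ) : ℝ :=
  (P_F - binomTail n θ₀ k) / binomPMF n θ₀ k

/-- The detection probability `P_D(n)` of the bit-density test with threshold `k`: the null success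
rate `θ₀` enters through the randomization only, the bits being Bernoulli(`θ₁`). -/
noncomputable def detectionProb (n : ℕ) (θ₀ θ₁ P_F : ℝ) (k : ℕ) : ℝ :=
  binomTail n θ₁ k + randomization n θ₀ P_F k * binomPMF n θ₁ k

lemma randomization_mem_Icc (hθ : θ ∈ Set.Icc (0 : ℝ) 1) (hPF : P_F ∈ Set.Icc (0 : ℝ) 1)
    (hk : IsBinomQuantile n θ (1 - P_F) k) :
    randomization n θ P_F k ∈ Set.Icc (0 : ℝ) 1 := by
  have hadd : binomCDF n θ k + binomTail n θ k = 1 :=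
    binomCDF_add_binomTail θ (hk.le (sub_le_self 1 hPF.1))
  have hle : binomCDF n θ k ≤ 1 - P_F + binomPMF n θ k :=
    hk.binomCDF_le_add_binomPMF (sub_nonneg.2 hPF.2)
  exact ⟨div_nonneg (by linarith [hk.1]) (binomPMF_nonneg hθ k),
    div_le_one_of_le₀ (by linarith) (binomPMF_nonneg hθ k)⟩

lemma binomTail_le_detectionProb (hθ₁ : θ₁ ∈ Set.Icc (0 : ℝ) 1)
    (hζ : 0 ≤ randomization n θ₀ P_F k) : binomTail n θ₁ k ≤ detectionProb n θ₀ θ₁ P_F k :=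
  le_add_of_nonneg_right (mul_nonneg hζ (binomPMF_nonneg hθ₁ k))

lemma detectionProb_le_one (hθ₁ : θ₁ ∈ Set.Icc (0 : ℝ) 1) (hkn : k ≤ n)
    (hζ : randomization n θ₀ P_F k ≤ 1) : detectionProb n θ₀ θ₁ P_F k ≤ 1 := calc
  _ ≤ binomTail n θ₁ k + binomPMF n θ₁ k :=
    add_le_add_right (mul_le_of_le_one_left (binomPMF_nonneg hθ₁ k) hζ) _
  _ ≤ binomTail n θ₁ k + binomCDF n θ₁ k := add_le_add_right (binomPMF_le_binomCDF hθ₁ k) _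
  _ = 1 := by rw [add_comm, binomCDF_add_binomTail θ₁ hkn]

lemma one_sub_inv_le_binomTail (hθ₀ : θ₀ ∈ Set.Icc (0 : ℝ) 1) (hθ₁ : θ₁ ∈ Set.Icc (0 : ℝ) 1)
    (hlt : θ₀ < θ₁) (hn : 0 < n) (hk : IsBinomQuantile n θ₀ q k)
    (hq : (n * (θ₁ - θ₀) ^ 2)⁻¹ ≤ 1 - q) :
    1 - (n * (θ₁ - θ₀) ^ 2)⁻¹ ≤ binomTail n θ₁ k := by
  have hδ : 0 < (θ₁ - θ₀) / 2 := by linarith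
  have hsq : n * (θ₁ - θ₀) ^ 2 = 4 * n * ((θ₁ - θ₀) / 2) ^ 2 := by ring
  rw [hsq] at hq ⊢
  have hkn : k ≤ n := hk.le (sub_nonneg.1 (le_trans (by positivity) hq))
  have hmid : k ≤ n * (θ₁ - (θ₁ - θ₀) / 2) := by
    convert hk.cast_le hθ₀ hn hδ hq using 2
    ring
  linarith [binomCDF_le_inv hθ₁ hn hδ hkn hmid, binomCDF_add_binomTail θ₁ hkn]

end

theorem stmt8_general {θ₀ θ₁ P_F : ℕ → ℝ} {γ : ℕ → ℕ} (hθ₀ : ∀ n, θ₀ n ∈ Set.Icc (0 : ℝ) 1)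
    (hθ₁ : ∀ n, θ₁ n ∈ Set.Icc (0 : ℝ) 1) (hlt : ∀ n, θ₀ n < θ₁ n) (hPF : ∀ n, P_F n ≤ 1)
    (hγ : ∀ n, 1 ≤ n → IsBinomQuantile n (θ₀ n) (1 - P_F n) (γ n))
    (hlim : Tendsto (fun n : ℕ => n * (θ₁ n - θ₀ n) ^ 2 * P_F n) atTop atTop) :
    Tendsto (fun n => detectionProb n (θ₀ n) (θ₁ n) (P_F n) (γ n)) atTop (𝓝 1) := by
  have hgap : Tendsto (fun n : ℕ => n * (θ₁ n - θ₀ n) ^ 2) atTop atTop :=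
    tendsto_atTop_mono (fun n => mul_le_of_le_one_right (by positivity) (hPF n)) hlim
  have hlower : Tendsto (fun n : ℕ => 1 - (n * (θ₁ n - θ₀ n) ^ 2)⁻¹) atTop (𝓝 1) := by
    simpa using hgap.inv_tendsto_atTop.const_sub 1
  have hbounds : ∀ᶠ n : ℕ in atTop,
      1 - (n * (θ₁ n - θ₀ n) ^ 2)⁻¹ ≤ detectionProb n (θ₀ n) (θ₁ n) (P_F n) (γ n) ∧
        detectionProb n (θ₀ n) (θ₁ n) (P_F n) (γ n) ≤ 1 := by
    filter_upwards [hlim.eventually_ge_atTop 1, hgap.eventually_gt_atTop 0,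
      eventually_ge_atTop 1] with n hlarge hpos hn
    have hinv : (n * (θ₁ n - θ₀ n) ^ 2)⁻¹ ≤ P_F n := (inv_le_iff_one_le_mul₀' hpos).2 hlarge
    have hPF₀ : 0 ≤ P_F n := (inv_pos.2 hpos).le.trans hinv
    have hζ := randomization_mem_Icc (hθ₀ n) ⟨hPF₀, hPF n⟩ (hγ n hn)
    have htail := one_sub_inv_le_binomTail (hθ₀ n) (hθ₁ n) (hlt n) hn (hγ n hn)
      (by rwa [sub_sub_cancel])
    exact ⟨htail.trans (binomTail_le_detectionProb (hθ₁ n) hζ.1),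
      detectionProb_le_one (hθ₁ n) ((hγ n hn).le (sub_le_self 1 hPF₀)) hζ.2⟩
  exact tendsto_of_tendsto_of_tendsto_of_le_of_le' hlower tendsto_const_nhds
    (hbounds.mono fun _ h => h.1) (hbounds.mono fun _ h => h.2)

theorem stmt8 (θ₀ θ₁ P_F : ℝ) (h₀ : θ₀ ∈ Set.Ioo (0 : ℝ) 1) (h₁ : θ₁ ∈ Set.Ioo (0 : ℝ) 1)
    (hlt : θ₀ < θ₁) (hPF : P_F ∈ Set.Ioo (0 : ℝ) 1) (γ : ℕ → ℕ)
    (hγ : ∀ n, 1 ≤ n →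
      (1 - P_F ≤ binomCDF n θ₀ (γ n) ∧ ∀ k < γ n, binomCDF n θ₀ k < 1 - P_F)) :
    Filter.Tendsto
      (fun n : ℕ => binomTail n θ₁ (γ n) +
        ((P_F - binomTail n θ₀ (γ n)) / binomPMF n θ₀ (γ n)) * binomPMF n θ₁ (γ n))
      Filter.atTop (nhds 1) := by
  have hlim : Tendsto (fun n : ℕ => n * (θ₁ - θ₀) ^ 2 * P_F) atTop atTop :=
    (tendsto_natCast_atTop_atTop.atTop_mul_const (pow_pos (sub_pos.2 hlt) 2)).atTop_mul_const hPF.1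
  exact stmt8_general (fun _ => Set.Ioo_subset_Icc_self h₀) (fun _ => Set.Ioo_subset_Icc_self h₁)
    (fun _ => hlt) (fun _ => hPF.2.le) hγ hlim
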